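/- Let F be a finite index set and v ∉ F an additional index, and let k ≥ 1 be a real number. Let (Y_u)_{u∈F∪{v}} be {0,1}-valued random variables on a probability space such that the family (Y_u)_{u∈F} is pairwise independent, Y_v is independent of Σ_{u∈F} Y_u, E[Y_u] = (1−k^{−1/3})·x_u with x_u ∈ [0,1] for all u ∈ F∪{v}, and Σ_{u∈F} x_u ≤ k. Then Pr[Y_v = 1 and Σ_{u∈F} Y_u ≤ k−1] ≥ (1 − 2·k^{−1/3})·x_v. -/

import Mathlib

open MeasureTheory ProbabilityTheory

/-!
Write `f = k ^ (-1/3)`, so `k = f⁻³`. The sum `S` of the `Y u` over `F` has mean at most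
`(1 - f) k`, and its variance is at most its mean because the covariances are nonpositive and each
`Y u` takes values in `[0, 1]`. For `k > 1` the threshold `k - 1` lies `f⁻² - 1 > 0` above
`(1 - f) k`, and Chebyshev's inequality gives `P(S > k - 1) ≤ f / (1 - f)`. By independence the
probability in question is then at least `(1 - f) x_v (1 - f / (1 - f)) = (1 - 2 f) x_v`. For
`k ≤ 1` this lower bound is nonpositive.
-/

lemma one_sub_mul_div_sq_le_div_one_sub {f k : ℝ} (hf0 : 0 < f) (hf1 : f < 1)
    (hfk : f ^ 3 * k = 1) : (1 - f) * k / (k - 1 - (1 - f) * k) ^ 2 ≤ f / (1 - f) := by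
  have one_sub_pos : 0 < 1 - f := sub_pos.2 hf1
  obtain rfl : k = 1 / f ^ 3 := by field_simp; linarith
  calc (1 - f) * (1 / f ^ 3) / (1 / f ^ 3 - 1 - (1 - f) * (1 / f ^ 3)) ^ 2
    _ = f / (1 - f) / (1 + f) ^ 2 := by
      have gap : 1 / f ^ 3 - 1 - (1 - f) * (1 / f ^ 3) = (1 - f) * (1 + f) / f ^ 2 := by
        field_simp
        ring
      rw [gap]
      field_simp
    _ ≤ f / (1 - f) := div_le_self (by positivity) (one_le_pow₀ (by linarith))

lemma rpow_neg_one_third_pow_three_mul_self {k : ℝ} (hk : 0 < k) :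
    (k ^ (-(1 / 3) : ℝ)) ^ 3 * k = 1 := by
  rw [← Real.rpow_mul_natCast hk.le, ← Real.rpow_add_one hk.ne']
  norm_num

section

variable {Ω ι : Type*} [MeasurableSpace Ω] {μ : Measure Ω}

lemma variance_sum_le_sum_variance [IsFiniteMeasure μ] {s : Finset ι} {X : ι → Ω → ℝ}
    (hX : ∀ i ∈ s, MemLp (X i) 2 μ)
    (hcov : (s : Set ι).Pairwise fun i j ↦ cov[X i, X j; μ] ≤ 0) :
    Var[fun ω ↦ ∑ i ∈ s, X i ω; μ] ≤ ∑ i ∈ s, Var[X i; μ] := by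
  classical
  rw [variance_fun_sum' hX]
  refine Finset.sum_le_sum fun i hi ↦ ?_
  have off_diagonal : ∑ j ∈ s.erase i, cov[X i, X j; μ] ≤ 0 :=
    Finset.sum_nonpos fun j hj ↦
      hcov hi (Finset.mem_of_mem_erase hj) (Finset.ne_of_mem_erase hj).symm
  rw [← Finset.add_sum_erase s _ hi, covariance_self (hX i hi).aemeasurable]
  exact add_le_of_nonpos_right off_diagonal

lemma variance_le_integral_of_mem_Icc_zero_one [IsProbabilityMeasure μ] {X : Ω → ℝ}
    (hX : AEMeasurable X μ) (h01 : ∀ᵐ ω ∂μ, X ω ∈ Set.Icc 0 1) : Var[X; μ] ≤ μ[X] :=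
  calc Var[X; μ] ≤ (1 - μ[X]) * (μ[X] - 0) := variance_le_sub_mul_sub h01 hX
    _ = μ[X] - μ[X] ^ 2 := by ring
    _ ≤ μ[X] := sub_le_self _ (sq_nonneg _)

lemma measureReal_lt_le_variance_div_sq [IsFiniteMeasure μ] {X : Ω → ℝ} (hX : MemLp X 2 μ)
    {a : ℝ} (ha : μ[X] < a) : μ.real {ω | a < X ω} ≤ Var[X; μ] / (a - μ[X]) ^ 2 := by
  have deviation_of_lt : ∀ ω, a < X ω → a - μ[X] ≤ |X ω - μ[X]| := fun ω hω ↦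
    (sub_le_sub_right hω.le _).trans (le_abs_self _)
  exact ENNReal.toReal_le_of_le_ofReal (div_nonneg (variance_nonneg _ _) (sq_nonneg _))
    ((measure_mono deviation_of_lt).trans (meas_ge_le_variance_div_sq hX (sub_pos.2 ha)))

lemma measureReal_lt_sum_le_div_sq [IsProbabilityMeasure μ] {s : Finset ι} {X : ι → Ω → ℝ}
    (hX : ∀ i ∈ s, AEMeasurable (X i) μ) (h01 : ∀ i ∈ s, ∀ᵐ ω ∂μ, X i ω ∈ Set.Icc 0 1)
    (hcov : (s : Set ι).Pairwise fun i j ↦ cov[X i, X j; μ] ≤ 0)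
    {m a : ℝ} (hm : ∑ i ∈ s, μ[X i] ≤ m) (hma : m < a) :
    μ.real {ω | a < ∑ i ∈ s, X i ω} ≤ m / (a - m) ^ 2 := by
  have hLp : ∀ i ∈ s, MemLp (X i) 2 μ := fun i hi ↦
    memLp_of_bounded (h01 i hi) (hX i hi).aestronglyMeasurable 2
  have mean_eq : ∫ ω, ∑ i ∈ s, X i ω ∂μ = ∑ i ∈ s, μ[X i] :=
    integral_finsetSum s fun i hi ↦ (hLp i hi).integrable one_le_two
  have mean_le : ∫ ω, ∑ i ∈ s, X i ω ∂μ ≤ m := mean_eq.trans_le hm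
  have variance_le : Var[fun ω ↦ ∑ i ∈ s, X i ω; μ] ≤ m :=
    calc Var[fun ω ↦ ∑ i ∈ s, X i ω; μ]
      _ ≤ ∑ i ∈ s, Var[X i; μ] := variance_sum_le_sum_variance hLp hcov
      _ ≤ ∑ i ∈ s, μ[X i] := Finset.sum_le_sum fun i hi ↦
        variance_le_integral_of_mem_Icc_zero_one (hX i hi) (h01 i hi)
      _ ≤ m := hm
  have hm0 : 0 ≤ m := (variance_nonneg _ _).trans variance_le
  have : 0 < a - m := sub_pos.2 hma
  calc μ.real {ω | a < ∑ i ∈ s, X i ω}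
    _ ≤ Var[fun ω ↦ ∑ i ∈ s, X i ω; μ] / (a - ∫ ω, ∑ i ∈ s, X i ω ∂μ) ^ 2 :=
      measureReal_lt_le_variance_div_sq (memLp_finsetSum s hLp) (mean_le.trans_lt hma)
    _ ≤ m / (a - m) ^ 2 := by gcongr

lemma one_sub_div_one_sub_le_measureReal_sum_le [IsProbabilityMeasure μ] {s : Finset ι}
    {X : ι → Ω → ℝ} (hX : ∀ i ∈ s, AEMeasurable (X i) μ)
    (h01 : ∀ i ∈ s, ∀ᵐ ω ∂μ, X i ω ∈ Set.Icc 0 1)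
    (hcov : (s : Set ι).Pairwise fun i j ↦ cov[X i, X j; μ] ≤ 0)
    {f k : ℝ} (hf0 : 0 < f) (hf1 : f < 1) (hfk : f ^ 3 * k = 1)
    (hmean : ∑ i ∈ s, μ[X i] ≤ (1 - f) * k) :
    1 - f / (1 - f) ≤ μ.real {ω | ∑ i ∈ s, X i ω ≤ k - 1} := by
  have hk : 0 < k := pos_of_mul_pos_right (hfk ▸ one_pos) (pow_pos hf0 3).le
  have mean_lt_threshold : (1 - f) * k < k - 1 := by
    have : f ^ 3 * k < f * k := by
      gcongr
      exact pow_lt_self_of_lt_one₀ hf0 hf1 (by norm_num)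
    linarith
  have tail_le : μ.real {ω | k - 1 < ∑ i ∈ s, X i ω} ≤ f / (1 - f) :=
    (measureReal_lt_sum_le_div_sq hX h01 hcov hmean mean_lt_threshold).trans
      (one_sub_mul_div_sq_le_div_one_sub hf0 hf1 hfk)
  have tail_eq : μ.real {ω | ∑ i ∈ s, X i ω ≤ k - 1}ᶜ = 1 - _ :=
    probReal_compl_eq_one_sub₀
      (nullMeasurableSet_le (Finset.aemeasurable_fun_sum s hX) aemeasurable_const)
  simp only [Set.compl_ofPred, not_le] at tail_eq
  linarith

lemma measureReal_eq_one_and_mem_of_indepFun {β : Type*} [MeasurableSpace β] {Z : Ω → ℝ}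
    {W : Ω → β} (hZ : AEMeasurable Z μ) (hZ01 : ∀ᵐ ω ∂μ, Z ω = 0 ∨ Z ω = 1)
    (hZW : IndepFun Z W μ) {t : Set β} (ht : MeasurableSet t) :
    μ.real {ω | Z ω = 1 ∧ W ω ∈ t} = μ[Z] * μ.real {ω | W ω ∈ t} := by
  rw [integral_of_ae_eq_zero_or_one hZ hZ01, measureReal_def, measureReal_def, measureReal_def,
    ← ENNReal.toReal_mul]
  exact congrArg ENNReal.toReal
    (hZW.measure_inter_preimage_eq_mul {1} t (measurableSet_singleton 1) ht)

end

theorem stmt7_general {Ω ι : Type*} [MeasurableSpace Ω] {μ : Measure Ω} [IsProbabilityMeasure μ]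
    {F : Finset ι} {Y : ι → Ω → ℝ} {Z : Ω → ℝ} {x : ι → ℝ} {z k : ℝ} (hk : 0 < k)
    (hY : ∀ u ∈ F, AEMeasurable (Y u) μ) (hY01 : ∀ u ∈ F, ∀ᵐ ω ∂μ, Y u ω ∈ Set.Icc 0 1)
    (hcov : (F : Set ι).Pairwise fun u w ↦ cov[Y u, Y w; μ] ≤ 0)
    (hYmean : ∀ u ∈ F, μ[Y u] = (1 - k ^ (-(1 / 3) : ℝ)) * x u) (hsum : ∑ u ∈ F, x u ≤ k)
    (hZ : AEMeasurable Z μ) (hZ01 : ∀ᵐ ω ∂μ, Z ω = 0 ∨ Z ω = 1)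
    (hZY : IndepFun Z (fun ω ↦ ∑ u ∈ F, Y u ω) μ)
    (hZmean : μ[Z] = (1 - k ^ (-(1 / 3) : ℝ)) * z) (hz : 0 ≤ z) :
    (1 - 2 * k ^ (-(1 / 3) : ℝ)) * z ≤ μ.real {ω | Z ω = 1 ∧ ∑ u ∈ F, Y u ω ≤ k - 1} := by
  have hfk := rpow_neg_one_third_pow_three_mul_self hk
  have hf0 : 0 < k ^ (-(1 / 3) : ℝ) := Real.rpow_pos_of_pos hk _
  rcases le_or_gt k 1 with hk1 | hk1
  · have hf1 : 1 ≤ k ^ (-(1 / 3) : ℝ) :=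
      Real.one_le_rpow_of_pos_of_le_one_of_nonpos hk hk1 (by norm_num)
    exact (mul_nonpos_of_nonpos_of_nonneg (by linarith) hz).trans measureReal_nonneg
  have hf1 : k ^ (-(1 / 3) : ℝ) < 1 := Real.rpow_lt_one_of_one_lt_of_neg hk1 (by norm_num)
  generalize k ^ (-(1 / 3) : ℝ) = f at *
  have one_sub_pos : 0 < 1 - f := sub_pos.2 hf1
  have sum_mean_le : ∑ u ∈ F, μ[Y u] ≤ (1 - f) * k := by
    rw [Finset.sum_congr rfl hYmean, ← Finset.mul_sum]
    gcongr
  have le_threshold : 1 - f / (1 - f) ≤ μ.real {ω | ∑ u ∈ F, Y u ω ≤ k - 1} :=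
    one_sub_div_one_sub_le_measureReal_sum_le hY hY01 hcov hf0 hf1 hfk sum_mean_le
  calc (1 - 2 * f) * z = (1 - f) * z * (1 - f / (1 - f)) := by field_simp; ring
    _ ≤ μ[Z] * μ.real {ω | ∑ u ∈ F, Y u ω ≤ k - 1} := by rw [hZmean]; gcongr
    _ = μ.real {ω | Z ω = 1 ∧ ∑ u ∈ F, Y u ω ≤ k - 1} :=
      (measureReal_eq_one_and_mem_of_indepFun hZ hZ01 hZY measurableSet_Iic).symm

/-- The per-vertex guarantee of the LP rounding for maximum `k`-colorable subgraph: with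
`f = k^(-1/3)` and `k ≥ 1`, under the hypotheses of pairwise independence,
`Pr[Y v = 1 ∧ ∑_{u ∈ F} Y u ≤ k - 1] ≥ (1 - 2 k^(-1/3)) * x v`. -/
theorem stmt7 {Ω : Type*} [MeasureSpace Ω] [IsProbabilityMeasure (volume : Measure Ω)]
    {ι : Type*} [DecidableEq ι] (F : Finset ι) (v : ι) (hv : v ∉ F)
    (Y : ι → Ω → ℝ) (x : ι → ℝ) (k : ℝ) (hk : 1 ≤ k)
    (hmeas : ∀ u ∈ insert v F, Measurable (Y u))
    (h01 : ∀ u ∈ insert v F, ∀ ω, Y u ω = 0 ∨ Y u ω = 1)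
    (hindep : ∀ u ∈ F, ∀ u' ∈ F, u ≠ u' → IndepFun (Y u) (Y u') volume)
    (hvindep : IndepFun (Y v) (fun ω => ∑ u ∈ F, Y u ω) volume)
    (hmean : ∀ u ∈ insert v F, ∫ ω, Y u ω = (1 - k ^ (-(1/3) : ℝ)) * x u)
    (hx : ∀ u ∈ insert v F, 0 ≤ x u ∧ x u ≤ 1)
    (hsum : ∑ u ∈ F, x u ≤ k) :
    (1 - 2 * k ^ (-(1/3) : ℝ)) * x v
      ≤ (volume {ω | Y v ω = 1 ∧ (∑ u ∈ F, Y u ω) ≤ k - 1}).toReal := by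
  simp only [Finset.forall_mem_insert] at hmeas h01 hmean
  have hY01 : ∀ u ∈ F, ∀ᵐ ω, Y u ω ∈ Set.Icc 0 1 := fun u hu ↦ .of_forall fun ω ↦ by
    rcases h01.2 u hu ω with h | h <;> simp [h]
  have hLp : ∀ u ∈ F, MemLp (Y u) 2 volume := fun u hu ↦
    memLp_of_bounded (hY01 u hu) (hmeas.2 u hu).aestronglyMeasurable 2
  exact stmt7_general (zero_lt_one.trans_le hk) (fun u hu ↦ (hmeas.2 u hu).aemeasurable) hY01
    (fun u hu w hw huw ↦ ((hindep u hu w hw huw).covariance_eq_zero (hLp u hu) (hLp w hw)).le)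
    hmean.2 hsum hmeas.1.aemeasurable (.of_forall h01.1) hvindep hmean.1
    (hx v (Finset.mem_insert_self v F)).1
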